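/- If x̄ is a local minimizer of the MPCC at which MPCC-GCQ holds, then x̄ is P_α-stationary for every α ∈ {0,1}^p. -/

import Mathlib

/-!
At a local minimizer `-∇f` lies in the polar of the tangent cone, hence by MPCC-GCQ in the polar of
the linearized cone. That cone is the union over `β ∈ {0,1}^p` of polyhedral cones, so Farkas'
lemma gives for every `β` weak multipliers with `μ_i ≥ 0` (if `β_i = 0`) or `ν_i ≥ 0` (if `β_i = 1`)
at all biactive indices (`exists_branch_multipliers`).

Weak multipliers form a convex set. Interpolating these `2^p` multipliers multi-affinely over the
cube `[0,1]^p` gives continuous `μ_i(t)`, `ν_i(t)` with `μ_i ≥ 0` on the face `t_i = 0` and `ν_i ≥ 0`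
on the face `t_i = 1`. For `α_i = 0` the function `min(μ_i, max(-ν_i, 0))` is nonnegative on the
first face, nonpositive on the second, and vanishes exactly when `μ_i, ν_i ≥ 0` or `μ_i = 0`; for
`α_i = 1` exchange the roles of `μ_i`, `ν_i` and change the sign. The Poincaré-Miranda theorem
(`poincare_miranda`) yields a common zero of these `p` functions, that is, P_α-stationarity.

The Poincaré-Miranda theorem follows by compactness from Kuhn's combinatorial lemma (`kuhn`), which
rests on a discrete Stokes theorem modulo 2. For labels `F_0, …, F_{p-1}` on the vertices of the
Freudenthal-Kuhn triangulation of the grid, the sum of the cup product `dF_0 ∪ ⋯ ∪ dF_{p-1}` over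
all simplices depends only on the values prescribed on the boundary of the cube; it is `1` for an
explicit labelling, so for every admissible labelling some simplex contributes, and on that simplex
no label is constant.
-/

open Set Filter RealInnerProductSpace

noncomputable section

abbrev Rn (n : ℕ) := EuclideanSpace ℝ (Fin n)

/-- The tangent cone (Bouligand) to a set `F` at a point `x`. -/
def tangentCone' {n : ℕ} (F : Set (Rn n)) (x : Rn n) : Set (Rn n) :=
  {d | ∃ (xk : ℕ → Rn n) (tk : ℕ → ℝ),
    (∀ k, xk k ∈ F) ∧ (∀ k, 0 < tk k) ∧
    Tendsto xk atTop (nhds x) ∧ Tendsto tk atTop (nhds 0) ∧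
    Tendsto (fun k => (tk k)⁻¹ • (xk k - x)) atTop (nhds d)}

/-- The polar cone of a set. -/
def polarCone {n : ℕ} (C : Set (Rn n)) : Set (Rn n) :=
  {d | ∀ y ∈ C, ⟪d, y⟫ ≤ 0}

/-- α ∈ {0,1}^p -/
def IsBinaryVec {p : ℕ} (α : Fin p → ℝ) : Prop := ∀ i, α i = 0 ∨ α i = 1

/-- d ∈ [0,1]^p -/
def IsUnitIntervalVec {p : ℕ} (d : Fin p → ℝ) : Prop := ∀ i, d i ∈ Set.Icc (0:ℝ) 1

variable {n l m p : ℕ}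

/-- The feasible set of the MPCC. -/
def MpccFeasible (g : Fin l → Rn n → ℝ) (h : Fin m → Rn n → ℝ)
    (G H : Fin p → Rn n → ℝ) : Set (Rn n) :=
  {x | (∀ i, g i x ≤ 0) ∧ (∀ i, h i x = 0) ∧ (∀ i, 0 ≤ G i x) ∧ (∀ i, 0 ≤ H i x) ∧
    ∑ i, G i x * H i x = 0}

/-- The MPCC-linearized tangent cone at xb. -/
def MpccLinCone (g : Fin l → Rn n → ℝ) (h : Fin m → Rn n → ℝ)
    (G H : Fin p → Rn n → ℝ) (xb : Rn n) : Set (Rn n) :=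
  {d | (∀ i, g i xb = 0 → ⟪gradient (g i) xb, d⟫ ≤ 0) ∧
    (∀ i, ⟪gradient (h i) xb, d⟫ = 0) ∧
    (∀ i, G i xb = 0 → 0 < H i xb → ⟪gradient (G i) xb, d⟫ = 0) ∧
    (∀ i, 0 < G i xb → H i xb = 0 → ⟪gradient (H i) xb, d⟫ = 0) ∧
    (∀ i, G i xb = 0 → H i xb = 0 →
      0 ≤ ⟪gradient (G i) xb, d⟫ ∧ 0 ≤ ⟪gradient (H i) xb, d⟫ ∧
      ⟪gradient (G i) xb, d⟫ * ⟪gradient (H i) xb, d⟫ = 0)}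

/-- The weak stationarity system of the MPCC for given multipliers. -/
def MpccWeakMult (f : Rn n → ℝ) (g : Fin l → Rn n → ℝ) (h : Fin m → Rn n → ℝ)
    (G H : Fin p → Rn n → ℝ) (xb : Rn n)
    (lam : Fin l → ℝ) (eta : Fin m → ℝ) (mu nu : Fin p → ℝ) : Prop :=
  gradient f xb + ∑ i, lam i • gradient (g i) xb + ∑ i, eta i • gradient (h i) xb
    - ∑ i, mu i • gradient (G i) xb - ∑ i, nu i • gradient (H i) xb = 0 ∧
  (∀ i, g i xb = 0 → 0 ≤ lam i) ∧ (∀ i, g i xb ≠ 0 → lam i = 0) ∧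
  (∀ i, 0 < G i xb → H i xb = 0 → mu i = 0) ∧
  (∀ i, G i xb = 0 → 0 < H i xb → nu i = 0)

/-- A_α-stationarity for the MPCC. -/
def MpccAStat (f : Rn n → ℝ) (g : Fin l → Rn n → ℝ) (h : Fin m → Rn n → ℝ)
    (G H : Fin p → Rn n → ℝ) (xb : Rn n) (α : Fin p → ℝ) : Prop :=
  ∃ lam eta mu nu, MpccWeakMult f g h G H xb lam eta mu nu ∧
    (∀ i, G i xb = 0 → H i xb = 0 → α i = 0 → 0 ≤ mu i) ∧
    (∀ i, G i xb = 0 → H i xb = 0 → α i = 1 → 0 ≤ nu i)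

/-- P_α-stationarity for the MPCC. -/
def MpccPStat (f : Rn n → ℝ) (g : Fin l → Rn n → ℝ) (h : Fin m → Rn n → ℝ)
    (G H : Fin p → Rn n → ℝ) (xb : Rn n) (α : Fin p → ℝ) : Prop :=
  ∃ lam eta mu nu, MpccWeakMult f g h G H xb lam eta mu nu ∧
    (∀ i, G i xb = 0 → H i xb = 0 → α i = 0 → (0 ≤ mu i ∧ 0 ≤ nu i) ∨ mu i = 0) ∧
    (∀ i, G i xb = 0 → H i xb = 0 → α i = 1 → (0 ≤ mu i ∧ 0 ≤ nu i) ∨ nu i = 0)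

/-- C_d-stationarity for the MPCC. -/
def MpccCStat (f : Rn n → ℝ) (g : Fin l → Rn n → ℝ) (h : Fin m → Rn n → ℝ)
    (G H : Fin p → Rn n → ℝ) (xb : Rn n) (d : Fin p → ℝ) : Prop :=
  ∃ lam eta mu nu, MpccWeakMult f g h G H xb lam eta mu nu ∧
    (∀ i, G i xb = 0 → H i xb = 0 →
      (0 ≤ mu i ∧ 0 ≤ nu i) ∨ (1 - d i) * mu i = d i * nu i)

/-- M-stationarity for the MPCC. -/
def MpccMStat (f : Rn n → ℝ) (g : Fin l → Rn n → ℝ) (h : Fin m → Rn n → ℝ)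
    (G H : Fin p → Rn n → ℝ) (xb : Rn n) : Prop :=
  ∃ lam eta mu nu, MpccWeakMult f g h G H xb lam eta mu nu ∧
    (∀ i, G i xb = 0 → H i xb = 0 → (0 ≤ mu i ∧ 0 ≤ nu i) ∨ mu i * nu i = 0)

/-- The standard linearization cone of the branch problem NLP(α) at xb. -/
def MpccNlpLinCone (g : Fin l → Rn n → ℝ) (h : Fin m → Rn n → ℝ)
    (G H : Fin p → Rn n → ℝ) (xb : Rn n) (α : Fin p → ℝ) : Set (Rn n) :=
  {d | (∀ i, g i xb = 0 → ⟪gradient (g i) xb, d⟫ ≤ 0) ∧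
    (∀ i, ⟪gradient (h i) xb, d⟫ = 0) ∧
    (∀ i, 0 < G i xb → H i xb = 0 → ⟪gradient (H i) xb, d⟫ = 0) ∧
    (∀ i, G i xb = 0 → H i xb = 0 → α i = 0 →
      ⟪gradient (H i) xb, d⟫ = 0 ∧ 0 ≤ ⟪gradient (G i) xb, d⟫) ∧
    (∀ i, G i xb = 0 → 0 < H i xb → ⟪gradient (G i) xb, d⟫ = 0) ∧
    (∀ i, G i xb = 0 → H i xb = 0 → α i = 1 →
      ⟪gradient (G i) xb, d⟫ = 0 ∧ 0 ≤ ⟪gradient (H i) xb, d⟫)}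

/-! ### Kuhn's lemma on the triangulated grid -/

/-- The `k`-th vertex of the simplex with base point `q` and order `σ` in the Freudenthal-Kuhn
triangulation of the integer grid: `q + e (σ 0) + ⋯ + e (σ (k - 1))`. -/
def kuhnVertex {p : ℕ} (q : Fin p → ℕ) (σ : Equiv.Perm (Fin p)) (k : ℕ) : Fin p → ℕ :=
  fun i => q i + if (σ.symm i : ℕ) < k then 1 else 0

/-- The sequence of vertices `x` with its `k`-th entry removed. Sequences are indexed by `ℕ`;
only finitely many entries matter. -/
def dropVertex {X : Type*} (k : ℕ) (x : ℕ → X) : ℕ → X :=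
  fun i => if i < k then x i else x (i + 1)

/-- The `j`-th factor of the cup product
`dF₀ ∪ ⋯ ∪ dF₍ₖ₋₁₎ ∪ Fₖ ∪ dF₍ₖ₊₁₎ ∪ ⋯ ∪ dF₍ₚ₋₁₎`, a mod 2 cochain of degree `p - 1`, evaluated on
the simplex with vertices `y 0, …, y (p - 1)`. In the last case `j > k`, so `j - 1` does not
truncate. -/
def cupSlot {X : Type*} {p : ℕ} (k : Fin p) (F : Fin p → X → ZMod 2) (y : ℕ → X)
    (j : Fin p) : ZMod 2 :=
  if j < k then F j (y (j + 1)) + F j (y j)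
  else if j = k then F j (y j)
  else F j (y j) + F j (y (j - 1))

lemma zmod_two_add_self (a : ZMod 2) : a + a = 0 := CharTwo.add_self_eq_zero a

/-- The partial sum over the faces `0, …, t` with `t ≤ k` telescopes modulo 2: its factors are
the increments between vertices `j, j + 1` for `j < t` and `j + 1, j + 2` for `t ≤ j < k`. -/
lemma coboundary_low {X : Type*} {p : ℕ} (k : Fin p) (F : Fin p → X → ZMod 2) (x : ℕ → X)
    (t : ℕ) (ht : t ≤ k) :
    ∑ l ∈ Finset.range (t + 1), ∏ j, cupSlot k F (dropVertex l x) j =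
      ∏ j : Fin p, if j < k then
          (if t ≤ j then F j (x (j + 2)) + F j (x (j + 1)) else F j (x (j + 1)) + F j (x j))
        else if j = k then F j (x (j + 1)) else F j (x (j + 1)) + F j (x j) := by
  induction t with
  | zero =>
    rw [Finset.sum_range_one]
    refine Finset.prod_congr rfl fun j _ => ?_
    unfold cupSlot dropVertex
    simp only [Fin.lt_def, Fin.ext_iff]
    split_ifs <;> first | omega | rfl | skip
    rw [show (j : ℕ) - 1 + 1 = j by omega]
  | succ t ih =>
    rw [Finset.sum_range_succ, ih (by omega), add_comm]
    -- the `t + 1`-st face is the sum of two consecutive partial sums, and the first cancels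
    have key : ∏ j, cupSlot k F (dropVertex (t + 1) x) j =
      (∏ j : Fin p, if j < k then
          (if t ≤ j then F j (x (j + 2)) + F j (x (j + 1)) else F j (x (j + 1)) + F j (x j))
        else if j = k then F j (x (j + 1)) else F j (x (j + 1)) + F j (x j)) +
      ∏ j : Fin p, if j < k then
          (if t + 1 ≤ j then F j (x (j + 2)) + F j (x (j + 1)) else F j (x (j + 1)) + F j (x j))
        else if j = k then F j (x (j + 1)) else F j (x (j + 1)) + F j (x j) := by
      symm
      refine Finset.prod_add_prod_eq (i := ⟨t, by omega⟩) (Finset.mem_univ _) ?_ ?_ ?_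
      · have : (⟨t, by omega⟩ : Fin p) < k := Fin.lt_def.2 (by simpa using ht)
        simp only [cupSlot, dropVertex, this, if_true]
        simp
        linear_combination zmod_two_add_self (F ⟨t, by omega⟩ (x (t + 1)))
      all_goals
        intro j _ hj
        have hj' : (j : ℕ) ≠ t := fun h => hj (Fin.ext h)
        unfold cupSlot dropVertex
        simp only [Fin.lt_def, Fin.ext_iff]
        split_ifs <;> first | omega | rfl | skip
        rw [show (j : ℕ) - 1 + 1 = j by omega]
    rw [key, add_right_comm, zmod_two_add_self, zero_add]

/-- Leibniz rule modulo 2: the coboundary of `dF₀ ∪ ⋯ ∪ Fₖ ∪ ⋯ ∪ dF₍ₚ₋₁₎` is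
`dF₀ ∪ ⋯ ∪ dFₖ ∪ ⋯ ∪ dF₍ₚ₋₁₎`. -/
lemma coboundary {X : Type*} {p : ℕ} (k : Fin p) (F : Fin p → X → ZMod 2) (x : ℕ → X) :
    ∑ l ∈ Finset.range (p + 1), ∏ j, cupSlot k F (dropVertex l x) j =
      ∏ j : Fin p, (F j (x (j + 1)) + F j (x j)) := by
  set T : ℕ → ZMod 2 := fun t => ∏ j : Fin p,
    if j < k then F j (x (j + 1)) + F j (x j)
    else if j = k then F j (x j)
    else if t ≤ j then F j (x (j + 1)) + F j (x j) else F j (x j) + F j (x (j - 1)) with hT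
  -- the faces after the `k`-th one telescope in the same way, with remainder `T t`
  have high : ∀ t, (k : ℕ) + 1 ≤ t → t ≤ p →
      ∑ l ∈ Finset.range t, ∏ j, cupSlot k F (dropVertex l x) j =
        (∏ j : Fin p, (F j (x (j + 1)) + F j (x j))) + T t := by
    intro t ht
    induction t, ht using Nat.le_induction with
    | base =>
      intro _
      rw [coboundary_low k F x k le_rfl, hT]
      have : (∏ j : Fin p, (F j (x (j + 1)) + F j (x j))) =
          (∏ j : Fin p, if j < k then
            (if (k : ℕ) ≤ j then F j (x (j + 2)) + F j (x (j + 1))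
              else F j (x (j + 1)) + F j (x j))
            else if j = k then F j (x (j + 1)) else F j (x (j + 1)) + F j (x j)) + T (k + 1) := by
        symm
        refine Finset.prod_add_prod_eq (i := k) (Finset.mem_univ _) ?_ ?_ ?_
        · simp
        all_goals
          intro j _ hj
          have hj' : (j : ℕ) ≠ k := fun h => hj (Fin.ext h)
          simp only [Fin.lt_def, Fin.ext_iff]
          split_ifs <;> first | omega | rfl
      rw [this, add_assoc, zmod_two_add_self, add_zero]
    | succ t ht ih =>
      intro htp
      rw [Finset.sum_range_succ, ih (by omega)]
      have key : ∏ j, cupSlot k F (dropVertex t x) j = T t + T (t + 1) := by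
        symm
        refine Finset.prod_add_prod_eq (i := ⟨t, by omega⟩) (Finset.mem_univ _) ?_ ?_ ?_
        · have h1 : ¬ (⟨t, by omega⟩ : Fin p) < k := fun h => by
            have := Fin.lt_def.1 h; simp at this; omega
          have h2 : ¬ (⟨t, by omega⟩ : Fin p) = k := fun h => by
            have := Fin.ext_iff.1 h; simp at this; omega
          have h3 : t - 1 < t := by omega
          simp only [cupSlot, dropVertex, h1, h2, if_false]
          simp [h3]
          linear_combination zmod_two_add_self (F ⟨t, by omega⟩ (x t))
        all_goals
          intro j _ hj
          have hj' : (j : ℕ) ≠ t := fun h => hj (Fin.ext h)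
          unfold cupSlot dropVertex
          simp only [Fin.lt_def, Fin.ext_iff]
          split_ifs <;> first | omega | rfl | skip
          rw [show (j : ℕ) - 1 + 1 = j by omega]
      rw [key, add_assoc, ← add_assoc (T t), zmod_two_add_self, zero_add]
  rw [Finset.sum_range_succ, high p k.2 le_rfl]
  have : ∏ j, cupSlot k F (dropVertex p x) j = T p := by
    refine Finset.prod_congr rfl fun j _ => ?_
    unfold cupSlot dropVertex
    have := j.2
    simp only [Fin.lt_def, Fin.ext_iff]
    split_ifs <;> first | omega | rfl
  rw [this, add_assoc, zmod_two_add_self, add_zero]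

lemma cupSlot_congr {X : Type*} {p : ℕ} (k : Fin p) (F : Fin p → X → ZMod 2) {y z : ℕ → X}
    (h : ∀ i < p, y i = z i) (j : Fin p) : cupSlot k F y j = cupSlot k F z j := by
  have := j.2
  have := k.2
  unfold cupSlot
  simp only [Fin.lt_def, Fin.ext_iff]
  split_ifs
  · rw [h _ (by omega), h _ (by omega)]
  · rw [h _ (by omega)]
  · rw [h _ (by omega), h _ (by omega)]

lemma sum_box_shift {p : ℕ} (N : ℕ) (i : Fin p) (Φ : (Fin p → ℕ) → ZMod 2)
    (h0 : ∀ q, q i = 0 → Φ q = 0) (hN : ∀ q, q i = N → Φ q = 0) :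
    ∑ q ∈ Fintype.piFinset (fun _ : Fin p => Finset.range N), Φ (q + Pi.single i 1) =
      ∑ q ∈ Fintype.piFinset (fun _ : Fin p => Finset.range N), Φ q := by
  refine Finset.sum_bij_ne_zero (fun q _ _ => q + Pi.single i 1) ?_ ?_ ?_ ?_
  · intro q hq hne
    simp only [Fintype.mem_piFinset, Finset.mem_range] at hq ⊢
    intro j
    by_cases hj : j = i
    · subst hj
      have h1 := hq j
      have h2 : (q + Pi.single j 1 : Fin p → ℕ) j ≠ N := fun h => hne (hN _ h)
      simp at h2 ⊢
      omega
    · simpa [hj] using hq j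
  · intro q _ _ q' _ _ h
    exact add_right_cancel h
  · intro q hq hne
    simp only [Fintype.mem_piFinset, Finset.mem_range] at hq
    have hpos : q i ≠ 0 := fun h => hne (h0 _ h)
    have heq : q - Pi.single i 1 + Pi.single i 1 = q := by
      ext j
      by_cases hj : j = i
      · subst hj; simp; omega
      · simp [hj]
    refine ⟨q - Pi.single i 1, ?_, ?_, heq⟩
    · simp only [Fintype.mem_piFinset, Finset.mem_range]
      intro j
      exact lt_of_le_of_lt (Nat.sub_le _ _) (hq j)
    · rwa [heq]
  · intros; rfl

/-- The faces opposite to an interior vertex cancel in pairs: exchanging two consecutive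
directions of the path `σ` changes only the vertex between them. -/
lemma interior_faces_cancel {p : ℕ} (k : Fin p) (F : Fin p → (Fin p → ℕ) → ZMod 2)
    (q : Fin p → ℕ) (t : ℕ) (ht : t + 1 < p) :
    ∑ σ : Equiv.Perm (Fin p), ∏ j, cupSlot k F (dropVertex (t + 1) (kuhnVertex q σ)) j = 0 := by
  have hne : (⟨t, by omega⟩ : Fin p) ≠ ⟨t + 1, ht⟩ := by simp
  refine Finset.sum_involution
    (fun σ _ => σ * Equiv.swap (⟨t, by omega⟩ : Fin p) ⟨t + 1, ht⟩) ?_ ?_ ?_ ?_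
  · intro σ _
    have : dropVertex (t + 1) (kuhnVertex q (σ * Equiv.swap (⟨t, by omega⟩ : Fin p) ⟨t + 1, ht⟩)) =
        dropVertex (t + 1) (kuhnVertex q σ) := by
      have hv : ∀ s, s ≠ t + 1 → kuhnVertex q (σ * Equiv.swap (⟨t, by omega⟩ : Fin p) ⟨t + 1, ht⟩) s =
          kuhnVertex q σ s := by
        intro s hs
        ext i
        unfold kuhnVertex
        congr 1
        have : ((σ * Equiv.swap (⟨t, by omega⟩ : Fin p) ⟨t + 1, ht⟩).symm i) =
            Equiv.swap (⟨t, by omega⟩ : Fin p) ⟨t + 1, ht⟩ (σ.symm i) := rfl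
        rw [this, Equiv.swap_apply_def]
        simp only [Fin.ext_iff]
        split_ifs <;> first | rfl | (exfalso; simp at *; omega)
      ext1 i
      unfold dropVertex
      split_ifs with h
      · exact hv _ (by omega)
      · exact hv _ (by omega)
    rw [this]
    exact zmod_two_add_self _
  · intro σ _ _ h
    exact hne (Equiv.swap_eq_one_iff.1 (mul_eq_left.1 h))
  · intros; exact Finset.mem_univ _
  · intro σ _
    rw [mul_assoc, Equiv.swap_mul_self, mul_one]

/-- The faces opposite to the first and to the last vertices cancel. The face of `(q, σ)` without
its first vertex is the face of `(q + e (σ 0), σ ∘ rotation)` without its last vertex, and the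
unpaired faces lie on the boundary of the cube, where the cochain vanishes. -/
lemma extreme_faces_cancel {n N : ℕ} (k : Fin (n + 1))
    (F : Fin (n + 1) → (Fin (n + 1) → ℕ) → ZMod 2)
    (h0 : ∀ j x, x j = 0 → F j x = 0) (hN : ∀ j, j ≠ k → ∀ x, x j = N → F j x = 1)
    (hk : ∀ x, x k = N → F k x = 0) :
    ∑ σ : Equiv.Perm (Fin (n + 1)),
      ∑ q ∈ Fintype.piFinset (fun _ : Fin (n + 1) => Finset.range N),
        ∏ j, cupSlot k F (dropVertex 0 (kuhnVertex q σ)) j =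
    ∑ σ : Equiv.Perm (Fin (n + 1)),
      ∑ q ∈ Fintype.piFinset (fun _ : Fin (n + 1) => Finset.range N),
        ∏ j, cupSlot k F (dropVertex (n + 1) (kuhnVertex q σ)) j := by
  refine Fintype.sum_equiv (Equiv.mulRight (finRotate (n + 1))) _ _ fun σ => ?_
  rw [Equiv.coe_mulRight]
  set τ := σ * finRotate (n + 1) with hτ
  have hτs : ∀ i, τ.symm i = (finRotate (n + 1)).symm (σ.symm i) := fun i => rfl
  have hrot : ∀ i : Fin (n + 1), ((finRotate (n + 1)).symm i : ℕ) = if i = 0 then n else (i : ℕ) - 1 := by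
    intro i
    obtain ⟨j, rfl⟩ := (finRotate (n + 1)).surjective i
    rw [Equiv.symm_apply_apply]
    rcases eq_or_ne j (Fin.last n) with rfl | hj
    · simp
    · have := coe_finRotate_of_ne_last hj
      rw [if_neg (by rw [Fin.ext_iff, this]; simp), this]; simp
  have hlast : (τ.symm (σ 0) : ℕ) = n := by rw [hτs, hrot]; simp
  have hshift : ∀ q : Fin (n + 1) → ℕ, ∀ t ≤ n,
      kuhnVertex q σ (t + 1) = kuhnVertex (q + Pi.single (σ 0) 1) τ t := by
    intro q t ht
    ext i
    unfold kuhnVertex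
    by_cases hi : i = σ 0
    · subst hi
      rw [hlast]
      simp [ht]
    · have h1 : σ.symm i ≠ 0 := fun h => hi (by rw [← h]; simp)
      have h2 : (σ.symm i : ℕ) ≠ 0 := fun h => h1 (Fin.ext h)
      rw [hτs, hrot, if_neg h1]
      simp only [Pi.add_apply, Pi.single_apply, hi, if_false, add_zero]
      congr 1
      split_ifs <;> omega
  refine Eq.trans ?_ (sum_box_shift N (σ 0)
    (fun q => ∏ j, cupSlot k F (dropVertex (n + 1) (kuhnVertex q τ)) j) ?_ ?_)
  · refine Finset.sum_congr rfl fun q _ => Finset.prod_congr rfl fun j _ => ?_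
    refine cupSlot_congr k F (fun i hi => ?_) j
    unfold dropVertex
    rw [if_neg (by omega), if_pos hi, hshift q i (by omega)]
  -- on the faces `x (σ 0) = 0` and `x (σ 0) = N` the factor with index `σ 0` vanishes
  · intro q hq
    have hc : ∀ t ≤ n, kuhnVertex q τ t (σ 0) = 0 := by
      intro t ht; unfold kuhnVertex; rw [hlast, if_neg (by omega), hq]
    have hc' : ∀ t ≤ n, F (σ 0) (kuhnVertex q τ t) = 0 := fun t ht => h0 _ _ (hc t ht)
    refine Finset.prod_eq_zero (Finset.mem_univ (σ 0)) ?_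
    rw [cupSlot_congr k F (z := kuhnVertex q τ) (fun i hi => by simp [dropVertex, hi])]
    have := (σ 0).2
    have := k.2
    unfold cupSlot
    simp only [Fin.lt_def]
    split_ifs
    · rw [hc' _ (by omega), hc' _ (by omega), add_zero]
    · rw [hc' _ (by omega)]
    · rw [hc' _ (by omega), hc' _ (by omega), add_zero]
  · intro q hq
    have hc : ∀ t ≤ n, kuhnVertex q τ t (σ 0) = N := by
      intro t ht; unfold kuhnVertex; rw [hlast, if_neg (by omega), hq, add_zero]
    refine Finset.prod_eq_zero (Finset.mem_univ (σ 0)) ?_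
    rw [cupSlot_congr k F (z := kuhnVertex q τ) (fun i hi => by simp [dropVertex, hi])]
    have := (σ 0).2
    have := k.2
    unfold cupSlot
    rcases eq_or_ne (σ 0) k with h | h
    · rw [if_neg (by rw [h]; simp), if_pos h]
      rw [h] at hc ⊢
      exact hk _ (hc _ (by omega))
    · have hc' : ∀ t ≤ n, F (σ 0) (kuhnVertex q τ t) = 1 := fun t ht => hN _ h _ (hc t ht)
      rw [if_neg h]
      simp only [Fin.lt_def]
      split_ifs
      · rw [hc' _ (by omega), hc' _ (by omega), zmod_two_add_self]
      · rw [hc' _ (by omega), hc' _ (by omega), zmod_two_add_self]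

/-- Discrete Stokes theorem: the sum of `dF₀ ∪ ⋯ ∪ dF₍ₚ₋₁₎` over the triangulated cube vanishes
modulo 2 if `F k` vanishes on both of its faces and the other `F j` are `0` and `1` on theirs. -/
lemma kuhn_sum_eq_zero {p N : ℕ} (k : Fin p) (F : Fin p → (Fin p → ℕ) → ZMod 2)
    (h0 : ∀ j x, x j = 0 → F j x = 0) (hN : ∀ j, j ≠ k → ∀ x, x j = N → F j x = 1)
    (hk : ∀ x, x k = N → F k x = 0) :
    ∑ σ : Equiv.Perm (Fin p), ∑ q ∈ Fintype.piFinset (fun _ : Fin p => Finset.range N),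
      ∏ j : Fin p, (F j (kuhnVertex q σ (j + 1)) + F j (kuhnVertex q σ j)) = 0 := by
  obtain ⟨n, rfl⟩ : ∃ n, p = n + 1 := ⟨p - 1, by have := k.2; omega⟩
  simp_rw [← coboundary k F]
  simp_rw [Finset.sum_range_succ _ (n + 1), Finset.sum_range_succ' _ n, Finset.sum_add_distrib]
  rw [extreme_faces_cancel k F h0 hN hk, add_assoc, zmod_two_add_self, add_zero]
  rw [Finset.sum_comm]
  refine Finset.sum_eq_zero fun q _ => ?_
  rw [Finset.sum_comm]
  refine Finset.sum_eq_zero fun t ht => ?_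
  exact interior_faces_cancel k F q t (by have := Finset.mem_range.1 ht; omega)

/-- For the reference labelling by `N ≤ x j`, only the simplex at the corner `(N - 1, …, N - 1)`
with the identity order contributes. -/
lemma kuhn_sum_eq_one {p N : ℕ} (hNpos : 0 < N) :
    ∑ σ : Equiv.Perm (Fin p), ∑ q ∈ Fintype.piFinset (fun _ : Fin p => Finset.range N),
      ∏ j : Fin p, ((if N ≤ kuhnVertex q σ (j + 1) j then 1 else 0) +
        (if N ≤ kuhnVertex q σ j j then 1 else 0) : ZMod 2) = 1 := by
  -- a nonzero factor forces the `j`-th step of the path to be in direction `j`, from `N - 1` to `N`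
  have key : ∀ (σ : Equiv.Perm (Fin p)) (q : Fin p → ℕ) (j : Fin p), q j < N →
      ((if N ≤ kuhnVertex q σ (j + 1) j then 1 else 0) +
        (if N ≤ kuhnVertex q σ j j then 1 else 0) : ZMod 2) ≠ 0 → σ.symm j = j ∧ q j = N - 1 := by
    intro σ q j hq hne
    by_contra hcon
    apply hne
    rw [Fin.ext_iff] at hcon
    unfold kuhnVertex
    rcases lt_trichotomy (σ.symm j : ℕ) j with h | h | h
    · rw [if_pos (by omega : (σ.symm j : ℕ) < j + 1), if_pos h, zmod_two_add_self]
    · rw [if_pos (by omega : (σ.symm j : ℕ) < j + 1), if_neg (by omega : ¬ (σ.symm j : ℕ) < j),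
        if_neg (by omega), if_neg (by omega), add_zero]
    · rw [if_neg (by omega : ¬ (σ.symm j : ℕ) < j + 1), if_neg (by omega : ¬ (σ.symm j : ℕ) < j),
        zmod_two_add_self]
  rw [Finset.sum_eq_single 1, Finset.sum_eq_single (fun _ => N - 1)]
  · refine Finset.prod_eq_one fun j _ => ?_
    have e : (Equiv.symm (1 : Equiv.Perm (Fin p))) j = j := rfl
    unfold kuhnVertex
    rw [e, if_pos (by simp; omega), if_neg (by simp; omega), add_zero]
  · intro q hq hne
    simp only [Fintype.mem_piFinset, Finset.mem_range] at hq
    by_contra hcon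
    exact hne (funext fun j => (key _ q j (hq j) (Finset.prod_ne_zero_iff.1 hcon j
      (Finset.mem_univ _))).2)
  · intro h
    exact absurd (by simp [Fintype.mem_piFinset, hNpos]) h
  · intro σ _ hne
    refine Finset.sum_eq_zero fun q hq => ?_
    simp only [Fintype.mem_piFinset, Finset.mem_range] at hq
    by_contra hcon
    refine hne (Equiv.ext fun j => ?_)
    have := (key σ q j (hq j) (Finset.prod_ne_zero_iff.1 hcon j (Finset.mem_univ _))).1
    exact (Equiv.symm_apply_eq σ).1 this |>.symm
  · intro h
    exact absurd (Finset.mem_univ _) h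

/-- Kuhn's lemma: for a labelling of the grid by `{0, 1}^p` whose `j`-th label is `0` where
`x j = 0` and `1` where `x j = N`, some simplex of the triangulation sees both values of every
label. -/
lemma kuhn {p N : ℕ} (hNpos : 0 < N) (F : Fin p → (Fin p → ℕ) → ZMod 2)
    (h0 : ∀ j x, x j = 0 → F j x = 0) (hN : ∀ j x, x j = N → F j x = 1) :
    ∃ (σ : Equiv.Perm (Fin p)) (q : Fin p → ℕ), (∀ i, q i < N) ∧
      ∀ j : Fin p, F j (kuhnVertex q σ (j + 1)) ≠ F j (kuhnVertex q σ j) := by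
  set R : Fin p → (Fin p → ℕ) → ZMod 2 := fun j x => if N ≤ x j then 1 else 0 with hR
  -- replacing the reference labels by those of `F` one at a time does not change the sum
  have hsum : ∀ S : Finset (Fin p),
      ∑ σ : Equiv.Perm (Fin p), ∑ q ∈ Fintype.piFinset (fun _ : Fin p => Finset.range N),
        ∏ j : Fin p, ((if j ∈ S then F j else R j) (kuhnVertex q σ (j + 1)) +
          (if j ∈ S then F j else R j) (kuhnVertex q σ j)) = 1 := by
    intro S
    induction S using Finset.induction_on with
    | empty => simpa [hR] using kuhn_sum_eq_one (p := p) hNpos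
    | insert k S hkS ih =>
      have hz := kuhn_sum_eq_zero (N := N) k
        (fun j x => if j = k then F j x + R j x else (if j ∈ S then F j else R j) x) ?_ ?_ ?_
      · rw [← ih]
        rw [← sub_eq_zero, sub_eq_add_neg, CharTwo.neg_eq, ← hz]
        simp_rw [← Finset.sum_add_distrib]
        refine Finset.sum_congr rfl fun σ _ => Finset.sum_congr rfl fun q _ => ?_
        refine Finset.prod_add_prod_eq (i := k) (Finset.mem_univ _) ?_ ?_ ?_
        · simp [hkS]; ring
        · intro j _ hj; simp [hj]
        · intro j _ hj; simp [hj]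
      · intro j x hx
        have hRx : R j x = 0 := by simp [hR, hx]; omega
        split_ifs <;> simp [hRx, h0 j x hx]
      · intro j hj x hx
        have hRx : R j x = 1 := by simp [hR, hx]
        split_ifs <;> simp_all
      · intro x hx
        have hRx : R k x = 1 := by simp [hR, hx]
        simp only [if_true, hRx, hN k x hx]
        exact zmod_two_add_self 1
  have h1 := hsum Finset.univ
  simp only [Finset.mem_univ, if_true] at h1
  obtain ⟨σ, -, hσ⟩ := Finset.exists_ne_zero_of_sum_ne_zero (h1.trans_ne one_ne_zero)
  obtain ⟨q, hq, hne⟩ := Finset.exists_ne_zero_of_sum_ne_zero hσ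
  simp only [Fintype.mem_piFinset, Finset.mem_range] at hq
  refine ⟨σ, q, hq, fun j hj => ?_⟩
  exact hne (Finset.prod_eq_zero (Finset.mem_univ j) (by rw [hj, zmod_two_add_self]))

/-! ### The Poincaré-Miranda theorem -/

/-- Kuhn's lemma on the grid of mesh `1 / (N + 1)`: near some point of the cube each `φ j` takes
both a nonnegative and a nonpositive value. -/
lemma miranda_approx {p : ℕ} (φ : Fin p → (Fin p → ℝ) → ℝ)
    (h0 : ∀ i, ∀ t ∈ Icc (0 : Fin p → ℝ) 1, t i = 0 → 0 ≤ φ i t)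
    (h1 : ∀ i, ∀ t ∈ Icc (0 : Fin p → ℝ) 1, t i = 1 → φ i t ≤ 0) (N : ℕ) :
    ∃ s ∈ Icc (0 : Fin p → ℝ) 1, ∀ j, ∃ a b : Fin p → ℝ,
      dist s a ≤ 1 / ((N : ℝ) + 1) ∧ dist s b ≤ 1 / ((N : ℝ) + 1) ∧ 0 ≤ φ j a ∧ φ j b ≤ 0 := by
  have hpos : (0 : ℝ) < (N : ℝ) + 1 := by positivity
  -- truncating at `1` keeps every grid point in the cube
  set P : (Fin p → ℕ) → (Fin p → ℝ) := fun x i => min ((x i : ℝ) / ((N : ℝ) + 1)) 1 with hP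
  have hPmem : ∀ x, P x ∈ Icc (0 : Fin p → ℝ) 1 := fun x =>
    ⟨fun i => le_min (by positivity) zero_le_one, fun i => min_le_right _ _⟩
  -- the label records the sign of `φ j`; on the two faces it is prescribed, compatibly with the sign
  set F : Fin p → (Fin p → ℕ) → ZMod 2 := fun j x =>
    if x j = 0 then 0 else if N + 1 ≤ x j then 1 else if 0 < φ j (P x) then 0 else 1 with hF
  have hF0 : ∀ j x, F j x = 0 → 0 ≤ φ j (P x) := by
    intro j x hx
    simp only [hF] at hx
    split_ifs at hx with ha hb hc
    · exact h0 j _ (hPmem x) (by simp [hP, ha])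
    · exact absurd hx one_ne_zero
    · exact hc.le
    · exact absurd hx one_ne_zero
  have hF1 : ∀ j x, F j x ≠ 0 → φ j (P x) ≤ 0 := by
    intro j x hx
    simp only [hF] at hx
    split_ifs at hx with ha hb hc
    · exact absurd rfl hx
    · refine h1 j _ (hPmem x) ?_
      simp only [hP]
      refine min_eq_right ((one_le_div hpos).2 ?_)
      exact_mod_cast hb
    · exact absurd rfl hx
    · exact not_lt.1 hc
  obtain ⟨σ, q, -, hne⟩ := kuhn (N := N + 1) (by omega) F
    (by intro j x hx; simp [hF, hx]) (by intro j x hx; simp [hF, hx])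
  have hdist : ∀ t, dist (P q) (P (kuhnVertex q σ t)) ≤ 1 / ((N : ℝ) + 1) := by
    intro t
    refine (dist_pi_le_iff (by positivity)).2 fun i => ?_
    rw [Real.dist_eq]
    refine (abs_inf_sub_inf_le_abs _ _ _).trans ?_
    rw [← sub_div, abs_div, abs_of_pos hpos]
    gcongr
    unfold kuhnVertex
    split_ifs <;> simp
  refine ⟨P q, hPmem q, fun j => ?_⟩
  by_cases hz : F j (kuhnVertex q σ j) = 0
  · exact ⟨_, _, hdist j, hdist (j + 1), hF0 _ _ hz, hF1 _ _ fun h => hne j (h.trans hz.symm)⟩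
  · have hz' : F j (kuhnVertex q σ (j + 1)) = 0 := by
      have h2 := hne j
      generalize F j (kuhnVertex q σ (j + 1)) = a at *
      generalize F j (kuhnVertex q σ j) = b at *
      revert a b; decide
    exact ⟨_, _, hdist (j + 1), hdist j, hF0 _ _ hz', hF1 _ _ hz⟩

/-- **Poincaré-Miranda theorem** on the unit cube. -/
theorem poincare_miranda {p : ℕ} (φ : Fin p → (Fin p → ℝ) → ℝ) (hc : ∀ i, Continuous (φ i))
    (h0 : ∀ i, ∀ t ∈ Icc (0 : Fin p → ℝ) 1, t i = 0 → 0 ≤ φ i t)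
    (h1 : ∀ i, ∀ t ∈ Icc (0 : Fin p → ℝ) 1, t i = 1 → φ i t ≤ 0) :
    ∃ t ∈ Icc (0 : Fin p → ℝ) 1, ∀ i, φ i t = 0 := by
  choose s hs a b ha hb hφa hφb using miranda_approx φ h0 h1
  obtain ⟨t, ht, ψ, hψ, hlim⟩ := isCompact_Icc.tendsto_subseq hs
  have hsmall : Tendsto (fun k => 1 / ((ψ k : ℝ) + 1)) atTop (nhds 0) :=
    tendsto_one_div_add_atTop_nhds_zero_nat.comp hψ.tendsto_atTop
  refine ⟨t, ht, fun i => le_antisymm ?_ ?_⟩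
  · have hbt : Tendsto (fun k => b (ψ k) i) atTop (nhds t) :=
      tendsto_of_tendsto_of_dist hlim
        (squeeze_zero (fun _ => dist_nonneg) (fun k => hb (ψ k) i) hsmall)
    exact le_of_tendsto' (((hc i).tendsto t).comp hbt) fun k => hφb (ψ k) i
  · have hat : Tendsto (fun k => a (ψ k) i) atTop (nhds t) :=
      tendsto_of_tendsto_of_dist hlim
        (squeeze_zero (fun _ => dist_nonneg) (fun k => ha (ψ k) i) hsmall)
    exact ge_of_tendsto' (((hc i).tendsto t).comp hat) fun k => hφa (ψ k) i

/-! ### Farkas' lemma -/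

/-- **Farkas' lemma** for finitely many homogeneous inequalities. The induction on the number of
inequalities is purely algebraic, so closedness of finitely generated cones is not needed. -/
lemma farkas_finset {E ι : Type*} [NormedAddCommGroup E] [InnerProductSpace ℝ E]
    (s : Finset ι) (v : ι → E) (c : E)
    (h : ∀ d : E, (∀ i ∈ s, 0 ≤ ⟪v i, d⟫) → 0 ≤ ⟪c, d⟫) :
    ∃ w : ι → ℝ, (∀ i ∈ s, 0 ≤ w i) ∧ c = ∑ i ∈ s, w i • v i := by
  classical
  induction s using Finset.induction_on generalizing v c with
  | empty =>
    refine ⟨0, by simp, ?_⟩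
    have := h (-c) (by simp)
    rw [inner_neg_right, real_inner_self_eq_norm_sq] at this
    have : ‖c‖ = 0 := by nlinarith [norm_nonneg c]
    simpa using this
  | insert k s hk ih =>
    by_cases hs : ∀ d : E, (∀ i ∈ s, 0 ≤ ⟪v i, d⟫) → 0 ≤ ⟪c, d⟫
    · obtain ⟨w, hw, hc⟩ := ih v c hs
      refine ⟨Function.update w k 0, ?_, ?_⟩
      · intro i hi
        rcases eq_or_ne i k with rfl | hik
        · simp
        · simpa [hik] using hw i ((Finset.mem_insert.1 hi).resolve_left hik)
      · rw [Finset.sum_insert hk, Function.update_self, zero_smul, zero_add, hc]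
        refine Finset.sum_congr rfl fun i hi => ?_
        rw [Function.update_of_ne (ne_of_mem_of_not_mem hi hk)]
    · push Not at hs
      obtain ⟨x, hx, hcx⟩ := hs
      have hkx : ⟪v k, x⟫ < 0 := by
        by_contra hcon
        refine absurd (h x fun i hi => ?_) (not_le.2 hcx)
        rcases Finset.mem_insert.1 hi with rfl | hi
        · exact not_lt.1 hcon
        · exact hx i hi
      set r : ℝ := ⟪v k, x⟫ with hr
      have hr0 : r ≠ 0 := hkx.ne
      -- project along `x` onto the hyperplane orthogonal to `v k`
      obtain ⟨w, hw, hc⟩ := ih (fun i => v i - (⟪v i, x⟫ / r) • v k) (c - (⟪c, x⟫ / r) • v k) (by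
        intro d hd
        have key : ∀ u : E, ⟪u - (⟪u, x⟫ / r) • v k, d⟫ = ⟪u, d - (⟪v k, d⟫ / r) • x⟫ := by
          intro u
          rw [inner_sub_left, inner_sub_right, real_inner_smul_left, real_inner_smul_right]
          ring
        rw [key]
        refine h _ fun i hi => ?_
        rcases Finset.mem_insert.1 hi with rfl | hi
        · rw [inner_sub_right, real_inner_smul_right, ← hr, div_mul_cancel₀ _ hr0, sub_self]
        · rw [← key]; exact hd i hi)
      refine ⟨Function.update w k (⟪c, x⟫ / r - ∑ i ∈ s, w i * (⟪v i, x⟫ / r)), ?_, ?_⟩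
      · intro i hi
        rcases eq_or_ne i k with rfl | hik
        · rw [Function.update_self]
          have h1 : 0 ≤ ⟪c, x⟫ / r := div_nonneg_of_nonpos hcx.le hkx.le
          have h2 : ∑ j ∈ s, w j * (⟪v j, x⟫ / r) ≤ 0 := Finset.sum_nonpos fun j hj =>
            mul_nonpos_of_nonneg_of_nonpos (hw j hj)
              (div_nonpos_of_nonneg_of_nonpos (hx j hj) hkx.le)
          linarith
        · simpa [hik] using hw i ((Finset.mem_insert.1 hi).resolve_left hik)
      · rw [Finset.sum_insert hk, Function.update_self]
        have h3 : ∑ i ∈ s, Function.update w k (⟪c, x⟫ / r - ∑ i ∈ s, w i * (⟪v i, x⟫ / r)) i • v i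
            = ∑ i ∈ s, w i • v i := Finset.sum_congr rfl fun i hi => by
          rw [Function.update_of_ne (ne_of_mem_of_not_mem hi hk)]
        rw [h3]
        simp only [smul_sub, smul_smul, Finset.sum_sub_distrib, ← Finset.sum_smul] at hc
        rw [sub_smul]
        refine (sub_eq_iff_eq_add.1 hc).trans ?_
        abel

/-- Farkas' lemma with equality constraints at the indices satisfying `e`, whose multipliers are
unrestricted in sign. -/
lemma farkas {E ι : Type*} [NormedAddCommGroup E] [InnerProductSpace ℝ E] [Fintype ι]
    (v : ι → E) (e : ι → Prop) (c : E)
    (h : ∀ d : E, (∀ i, 0 ≤ ⟪v i, d⟫) → (∀ i, e i → ⟪v i, d⟫ = 0) → 0 ≤ ⟪c, d⟫) :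
    ∃ w : ι → ℝ, (∀ i, ¬ e i → 0 ≤ w i) ∧ c = ∑ i, w i • v i := by
  classical
  obtain ⟨w, hw, hc⟩ := farkas_finset (Finset.univ : Finset (ι ⊕ ι))
    (Sum.elim v fun i => if e i then -v i else 0) c (by
      intro d hd
      refine h d (fun i => by simpa using hd (Sum.inl i) (Finset.mem_univ _)) fun i hi => ?_
      have h1 := hd (Sum.inl i) (Finset.mem_univ _)
      have h2 := hd (Sum.inr i) (Finset.mem_univ _)
      simp only [Sum.elim_inl, Sum.elim_inr, hi, if_true, inner_neg_left] at h1 h2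
      linarith)
  refine ⟨fun i => w (Sum.inl i) - if e i then w (Sum.inr i) else 0, ?_, ?_⟩
  · intro i hi
    simpa [hi] using hw (Sum.inl i) (Finset.mem_univ _)
  · rw [hc, Fintype.sum_sum_type, ← Finset.sum_add_distrib]
    refine Finset.sum_congr rfl fun i _ => ?_
    by_cases hi : e i <;> simp [hi, sub_smul, ← sub_eq_add_neg]

/-! ### Multipliers of the MPCC -/

lemma neg_gradient_mem_polarCone {f : Rn n → ℝ} {S : Set (Rn n)} {xb : Rn n}
    (hf : DifferentiableAt ℝ f xb) (hmin : IsLocalMinOn f S xb) :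
    -gradient f xb ∈ polarCone (tangentCone' S xb) := by
  rintro d ⟨xk, tk, hxk, htk, hx, -, hd⟩
  have hfd := hf.hasGradientAt.hasFDerivAt.hasFDerivWithinAt (s := S)
  have hlim := hfd.lim (l := atTop) (c := fun k => (tk k)⁻¹) (d := fun k => xk k - xb) (v := d)
    (by simpa using hx.sub_const xb) (Eventually.of_forall fun k => by simpa using hxk k) hd
  have hev : ∀ᶠ k in atTop, f xb ≤ f (xk k) :=
    (tendsto_nhdsWithin_iff.2 ⟨hx, Eventually.of_forall hxk⟩).eventually hmin
  rw [inner_neg_left, neg_nonpos]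
  refine ge_of_tendsto hlim ?_
  filter_upwards [hev] with k hk
  have : (0 : ℝ) < (tk k)⁻¹ := inv_pos.2 (htk k)
  simp only [add_sub_cancel, smul_eq_mul]
  exact mul_nonneg this.le (sub_nonneg.2 hk)

/-- Each branch `β` of the complementarity constraints yields a polyhedral subcone of the
linearized cone; Farkas' lemma on it gives weak multipliers with `0 ≤ mu i` (if `β i = false`) or
`0 ≤ nu i` (if `β i = true`) at the biactive indices. -/
lemma exists_branch_multipliers (f : Rn n → ℝ) (g : Fin l → Rn n → ℝ)
    (h : Fin m → Rn n → ℝ) (G H : Fin p → Rn n → ℝ) (xb : Rn n)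
    (hpol : -gradient f xb ∈ polarCone (MpccLinCone g h G H xb)) (β : Fin p → Bool) :
    ∃ lam eta mu nu, MpccWeakMult f g h G H xb lam eta mu nu ∧
      (∀ i, G i xb = 0 → H i xb = 0 → β i = false → 0 ≤ mu i) ∧
      (∀ i, G i xb = 0 → H i xb = 0 → β i = true → 0 ≤ nu i) := by
  classical
  obtain ⟨w, hw, hc⟩ := farkas
    (Sum.elim (fun i : Fin l => if g i xb = 0 then -gradient (g i) xb else 0)
      (Sum.elim (fun i : Fin m => gradient (h i) xb)
        (Sum.elim (fun i : Fin p => if G i xb = 0 then gradient (G i) xb else 0)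
          (fun i : Fin p => if H i xb = 0 then gradient (H i) xb else 0))))
    (Sum.elim (fun _ => False) (Sum.elim (fun _ => True)
      (Sum.elim (fun i => 0 < H i xb ∨ β i = true) (fun i => 0 < G i xb ∨ β i = false))))
    (gradient f xb) (by
      intro d hd he
      have hmem : d ∈ MpccLinCone g h G H xb := by
        refine ⟨fun i hi => ?_, fun i => ?_, fun i hi hi' => ?_, fun i hi' hi => ?_,
          fun i hi hi' => ?_⟩
        · simpa [hi, inner_neg_left] using hd (Sum.inl i)
        · simpa using he (Sum.inr (Sum.inl i)) trivial
        · simpa [hi] using he (Sum.inr (Sum.inr (Sum.inl i))) (Or.inl hi')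
        · simpa [hi] using he (Sum.inr (Sum.inr (Sum.inr i))) (Or.inl hi')
        · refine ⟨by simpa [hi] using hd (Sum.inr (Sum.inr (Sum.inl i))),
            by simpa [hi'] using hd (Sum.inr (Sum.inr (Sum.inr i))), ?_⟩
          cases hb : β i
          · have : ⟪gradient (H i) xb, d⟫ = 0 := by
              simpa [hi'] using he (Sum.inr (Sum.inr (Sum.inr i))) (Or.inr hb)
            rw [this, mul_zero]
          · have : ⟪gradient (G i) xb, d⟫ = 0 := by
              simpa [hi] using he (Sum.inr (Sum.inr (Sum.inl i))) (Or.inr hb)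
            rw [this, zero_mul]
      have := hpol d hmem
      rw [inner_neg_left] at this
      linarith)
  refine ⟨fun i => if g i xb = 0 then w (Sum.inl i) else 0, fun i => -w (Sum.inr (Sum.inl i)),
    fun i => if G i xb = 0 then w (Sum.inr (Sum.inr (Sum.inl i))) else 0,
    fun i => if H i xb = 0 then w (Sum.inr (Sum.inr (Sum.inr i))) else 0,
    ⟨?_, ?_, ?_, ?_, ?_⟩, ?_, ?_⟩
  · rw [hc]
    simp only [Fintype.sum_sum_type, Sum.elim_inl, Sum.elim_inr, smul_ite, ite_smul, smul_zero,
      zero_smul, smul_neg, neg_smul, Finset.sum_neg_distrib]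
    have : ∑ i, (if g i xb = 0 then -(w (Sum.inl i) • gradient (g i) xb) else 0) =
        -∑ i, (if g i xb = 0 then w (Sum.inl i) • gradient (g i) xb else 0) := by
      rw [← Finset.sum_neg_distrib]
      exact Finset.sum_congr rfl fun i _ => by split_ifs <;> simp
    rw [this]
    abel
  · intro i hi
    simpa [hi] using hw (Sum.inl i) id
  · intro i hi
    simp [hi]
  · intro i hi _
    simp [hi.ne']
  · intro i _ hi
    simp [hi.ne']
  · intro i hi hi' hb
    simpa [hi] using hw (Sum.inr (Sum.inr (Sum.inl i))) (by simp [hi', hb])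
  · intro i hi hi' hb
    simpa [hi'] using hw (Sum.inr (Sum.inr (Sum.inr i))) (by simp [hi, hb])

/-- The weight of the vertex `β` of the cube in multi-affine interpolation at the point `t`. -/
def cubeWeight {p : ℕ} (β : Fin p → Bool) (t : Fin p → ℝ) : ℝ :=
  ∏ i, if β i then t i else 1 - t i

lemma cubeWeight_nonneg {p : ℕ} (β : Fin p → Bool) {t : Fin p → ℝ}
    (ht : t ∈ Icc (0 : Fin p → ℝ) 1) : 0 ≤ cubeWeight β t := by
  refine Finset.prod_nonneg fun i _ => ?_
  have h0 : 0 ≤ t i := ht.1 i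
  have h1 : t i ≤ 1 := ht.2 i
  split_ifs <;> linarith

lemma sum_cubeWeight {p : ℕ} (t : Fin p → ℝ) : ∑ β : Fin p → Bool, cubeWeight β t = 1 := by
  have := Finset.prod_univ_sum (fun _ : Fin p => (Finset.univ : Finset Bool))
    (fun i b => if b then t i else 1 - t i)
  rw [Fintype.piFinset_univ] at this
  unfold cubeWeight
  rw [← this]
  simp

lemma continuous_cubeWeight {p : ℕ} (β : Fin p → Bool) : Continuous (cubeWeight β) := by
  refine continuous_finsetProd _ fun i _ => ?_
  cases β i <;> simp <;> fun_prop

lemma cubeWeight_eq_zero {p : ℕ} {β : Fin p → Bool} {t : Fin p → ℝ} {i : Fin p}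
    (h : (if β i then t i else 1 - t i) = 0) : cubeWeight β t = 0 :=
  Finset.prod_eq_zero (Finset.mem_univ i) h

lemma sum_comb_smul {E ι κ : Type*} [AddCommGroup E] [Module ℝ E] [Fintype ι] [Fintype κ]
    (w : κ → ℝ) (a : κ → ι → ℝ) (v : ι → E) :
    ∑ i, (∑ b, w b * a b i) • v i = ∑ b, w b • ∑ i, a b i • v i := by
  simp_rw [Finset.sum_smul, Finset.smul_sum, mul_smul]
  exact Finset.sum_comm

lemma weakMult_comb {κ : Type*} [Fintype κ] {f : Rn n → ℝ} {g : Fin l → Rn n → ℝ}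
    {h : Fin m → Rn n → ℝ} {G H : Fin p → Rn n → ℝ} {xb : Rn n}
    {w : κ → ℝ} (hw : ∀ b, 0 ≤ w b) (hw1 : ∑ b, w b = 1)
    {lam : κ → Fin l → ℝ} {eta : κ → Fin m → ℝ} {mu nu : κ → Fin p → ℝ}
    (hM : ∀ b, MpccWeakMult f g h G H xb (lam b) (eta b) (mu b) (nu b)) :
    MpccWeakMult f g h G H xb (fun i => ∑ b, w b * lam b i) (fun i => ∑ b, w b * eta b i)
      (fun i => ∑ b, w b * mu b i) (fun i => ∑ b, w b * nu b i) := by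
  refine ⟨?_, ?_, ?_, ?_, ?_⟩
  · have hf : gradient f xb = ∑ b, w b • gradient f xb := by
      rw [← Finset.sum_smul, hw1, one_smul]
    rw [hf]
    simp_rw [sum_comb_smul]
    rw [← Finset.sum_add_distrib, ← Finset.sum_add_distrib, ← Finset.sum_sub_distrib,
      ← Finset.sum_sub_distrib]
    refine Finset.sum_eq_zero fun b _ => ?_
    rw [← smul_add, ← smul_add, ← smul_sub, ← smul_sub, (hM b).1, smul_zero]
  · exact fun i hi => Finset.sum_nonneg fun b _ => mul_nonneg (hw b) ((hM b).2.1 i hi)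
  · exact fun i hi => Finset.sum_eq_zero fun b _ => by rw [(hM b).2.2.1 i hi, mul_zero]
  · exact fun i hi hi' => Finset.sum_eq_zero fun b _ => by rw [(hM b).2.2.2.1 i hi hi', mul_zero]
  · exact fun i hi hi' => Finset.sum_eq_zero fun b _ => by rw [(hM b).2.2.2.2 i hi hi', mul_zero]

/-- The zero set of `min a (max (-b) 0)` is contained in the union of the closed first quadrant
and the line `a = 0`. -/
lemma min_max_eq_zero {a b : ℝ} (h : min a (max (-b) 0) = 0) : (0 ≤ a ∧ 0 ≤ b) ∨ a = 0 := by
  rcases min_choice a (max (-b) 0) with h1 | h1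
  · exact Or.inr (h1.symm.trans h)
  · refine Or.inl ⟨?_, ?_⟩
    · rw [← h]; exact min_le_left _ _
    · have : -b ≤ 0 := (le_max_left _ _).trans_eq (h1.symm.trans h)
      linarith

/-- a local minimizer of the MPCC satisfying MPCC-GCQ is
P_α-stationary for every α ∈ {0,1}^p. -/
theorem mpcc_gcq_implies_PStat_all {n l m p : ℕ} (f : Rn n → ℝ) (g : Fin l → Rn n → ℝ)
    (h : Fin m → Rn n → ℝ) (G H : Fin p → Rn n → ℝ) (xb : Rn n)
    (hf : Differentiable ℝ f) (hg : ∀ i, Differentiable ℝ (g i))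
    (hh : ∀ i, Differentiable ℝ (h i)) (hG : ∀ i, Differentiable ℝ (G i))
    (hH : ∀ i, Differentiable ℝ (H i))
    (hfeas : xb ∈ MpccFeasible g h G H)
    (hmin : IsLocalMinOn f (MpccFeasible g h G H) xb)
    (hGCQ : polarCone (tangentCone' (MpccFeasible g h G H) xb)
      = polarCone (MpccLinCone g h G H xb)) :
    ∀ α : Fin p → ℝ, IsBinaryVec α → MpccPStat f g h G H xb α := by
  classical
  intro α _
  have hpol : -gradient f xb ∈ polarCone (MpccLinCone g h G H xb) :=
    hGCQ ▸ neg_gradient_mem_polarCone (hf xb) hmin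
  choose lam eta mu nu hM hmu hnu using exists_branch_multipliers f g h G H xb hpol
  set μ : Fin p → (Fin p → ℝ) → ℝ := fun i t => ∑ β, cubeWeight β t * mu β i with hμ
  set ν : Fin p → (Fin p → ℝ) → ℝ := fun i t => ∑ β, cubeWeight β t * nu β i with hν
  have hμc : ∀ i, Continuous (μ i) := fun i =>
    continuous_finsetSum _ fun β _ => (continuous_cubeWeight β).mul continuous_const
  have hνc : ∀ i, Continuous (ν i) := fun i =>
    continuous_finsetSum _ fun β _ => (continuous_cubeWeight β).mul continuous_const
  -- only the branches with `β i = false` contribute on the face `t i = 0`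
  have hμ0 : ∀ i, G i xb = 0 → H i xb = 0 → ∀ t ∈ Icc (0 : Fin p → ℝ) 1, t i = 0 → 0 ≤ μ i t := by
    intro i hi hi' t ht hti
    refine Finset.sum_nonneg fun β _ => ?_
    cases hb : β i
    · exact mul_nonneg (cubeWeight_nonneg β ht) (hmu β i hi hi' hb)
    · rw [cubeWeight_eq_zero (i := i) (by simp [hb, hti]), zero_mul]
  have hν1 : ∀ i, G i xb = 0 → H i xb = 0 → ∀ t ∈ Icc (0 : Fin p → ℝ) 1, t i = 1 → 0 ≤ ν i t := by
    intro i hi hi' t ht hti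
    refine Finset.sum_nonneg fun β _ => ?_
    cases hb : β i
    · rw [cubeWeight_eq_zero (i := i) (by simp [hb, hti]), zero_mul]
    · exact mul_nonneg (cubeWeight_nonneg β ht) (hnu β i hi hi' hb)
  -- each function vanishes exactly where the multipliers satisfy the sign condition for `α i`, and
  -- it is nonnegative where `0 ≤ μ i` and nonpositive where `0 ≤ ν i`
  obtain ⟨t, ht, hzero⟩ := poincare_miranda
    (fun i t => if G i xb = 0 ∧ H i xb = 0 then
      (if α i = 0 then min (μ i t) (max (-ν i t) 0) else -min (ν i t) (max (-μ i t) 0)) else 0)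
    (by
      intro i
      have h1 := hμc i
      have h2 := hνc i
      split_ifs <;> fun_prop)
    (by
      intro i t ht hti
      split_ifs with hI hα
      · exact le_min (hμ0 i hI.1 hI.2 t ht hti) (le_max_right _ _)
      · have := hμ0 i hI.1 hI.2 t ht hti
        rw [max_eq_right (by linarith)]
        exact neg_nonneg.2 (min_le_right _ _)
      · exact le_rfl)
    (by
      intro i t ht hti
      split_ifs with hI hα
      · have := hν1 i hI.1 hI.2 t ht hti
        rw [max_eq_right (by linarith)]
        exact min_le_right _ _
      · exact neg_nonpos.2 (le_min (hν1 i hI.1 hI.2 t ht hti) (le_max_right _ _))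
      · exact le_rfl)
  refine ⟨_, _, fun i => μ i t, fun i => ν i t,
    weakMult_comb (fun β => cubeWeight_nonneg β ht) (sum_cubeWeight t) hM, ?_, ?_⟩
  · intro i hi hi' hα
    have := hzero i
    rw [if_pos ⟨hi, hi'⟩, if_pos hα] at this
    exact min_max_eq_zero this
  · intro i hi hi' hα
    have := hzero i
    rw [if_pos ⟨hi, hi'⟩, if_neg (by rw [hα]; exact one_ne_zero), neg_eq_zero] at this
    exact (min_max_eq_zero this).imp_left And.symm
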